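/- Let χ(ν) denote the square root of a chi-square random variable with ν degrees of freedom. Then for all u > 0: (i) P( χ(ν) ≥ √ν + √(2u) ) ≤ exp(−u), and (ii) P( χ(ν) ≤ √(uν) ) ≤ (2/√(πν)) (u e / 2)^{ν/4}. -/

import Mathlib

open MeasureTheory ProbabilityTheory Real

/-- One step of the Stirling recursion. -/
lemma chi_step (a : ℝ) (ha : 0 < a) :
    Real.log (Gamma (a + 1 + 1)) - Real.log (a + 1) / 2 - (a + 1) * Real.log (a + 1) + (a + 1)
     ≤ Real.log (Gamma (a + 1)) - Real.log a / 2 - a * Real.log a + a := by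
  rw [Real.Gamma_add_one (s := a + 1) (by positivity),
    Real.log_mul (by positivity) (Real.Gamma_pos_of_pos (by positivity)).ne']
  have h := Real.le_log_one_add_of_nonneg (x := 1 / a) (by positivity)
  have h1 : Real.log (1 + 1 / a) = Real.log (a + 1) - Real.log a := by
    rw [← Real.log_div (by positivity) (by positivity)]
    congr 1; field_simp
  have h2 : 2 * (1 / a) / (1 / a + 2) = 1 / (a + 1 / 2) := by
    field_simp; ring
  rw [h1, h2, div_le_iff₀ (by positivity)] at h
  nlinarith

lemma chi_low (m : ℕ) (hm : 1 ≤ m) :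
    Real.log (2 * π) / 2 - 1 / (4 * m) ≤
      Real.log (Gamma ((m + 1 / 2 : ℝ) + 1)) - Real.log (m + 1 / 2 : ℝ) / 2
        - (m + 1 / 2 : ℝ) * Real.log (m + 1 / 2 : ℝ) + (m + 1 / 2 : ℝ) := by
  have hm' : (0 : ℝ) < m := by exact_mod_cast hm
  have hc := Real.convexOn_log_Gamma.2
    (show (m + 1 / 2 : ℝ) ∈ Set.Ioi (0 : ℝ) from Set.mem_Ioi.2 (by positivity))
    (show (m + 1 / 2 : ℝ) + 1 ∈ Set.Ioi (0 : ℝ) from Set.mem_Ioi.2 (by positivity))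
    (show (0 : ℝ) ≤ 1 / 2 by norm_num) (show (0 : ℝ) ≤ 1 / 2 by norm_num) (by norm_num)
  have e : (1 / 2 : ℝ) • (m + 1 / 2 : ℝ) + (1 / 2 : ℝ) • ((m + 1 / 2 : ℝ) + 1) = (m : ℝ) + 1 := by
    simp; ring
  rw [e] at hc
  simp only [Function.comp, smul_eq_mul] at hc
  rw [Real.Gamma_nat_eq_factorial] at hc
  have hg : Real.log (Gamma ((m + 1 / 2 : ℝ) + 1)) =
      Real.log (m + 1 / 2 : ℝ) + Real.log (Gamma (m + 1 / 2 : ℝ)) := by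
    rw [Real.Gamma_add_one (by positivity),
      Real.log_mul (by positivity) (Real.Gamma_pos_of_pos (by positivity)).ne']
  have hs := Stirling.le_log_factorial_stirling (n := m) (by omega)
  have hl : Real.log (m + 1 / 2 : ℝ) - Real.log m ≤ 1 / (2 * m) := by
    rw [← Real.log_div (by positivity) (by positivity)]
    refine (Real.log_le_sub_one_of_pos (by positivity)).trans (le_of_eq ?_)
    field_simp; ring
  have hk : (m + 1 / 2 : ℝ) * (Real.log (m + 1 / 2 : ℝ) - Real.log m) ≤ 1 / 2 + 1 / (4 * m) := by
    refine (mul_le_mul_of_nonneg_left hl (by positivity)).trans (le_of_eq ?_)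
    field_simp; ring
  nlinarith

lemma chi_half (m : ℕ) :
    Real.log (2 * π) / 2 ≤
      Real.log (Gamma ((m + 1 / 2 : ℝ) + 1)) - Real.log (m + 1 / 2 : ℝ) / 2
        - (m + 1 / 2 : ℝ) * Real.log (m + 1 / 2 : ℝ) + (m + 1 / 2 : ℝ) := by
  have hanti : Antitone (fun m : ℕ => Real.log (Gamma ((m + 1 / 2 : ℝ) + 1))
      - Real.log (m + 1 / 2 : ℝ) / 2
        - (m + 1 / 2 : ℝ) * Real.log (m + 1 / 2 : ℝ) + (m + 1 / 2 : ℝ)) := by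
    refine antitone_nat_of_succ_le fun n => ?_
    have := chi_step (n + 1 / 2) (by positivity)
    have e : ((n + 1 : ℕ) : ℝ) + 1 / 2 = (n + 1 / 2 : ℝ) + 1 := by push_cast; ring
    rw [e]
    exact this
  have ht : Filter.Tendsto (fun k : ℕ => Real.log (2 * π) / 2 - (1 / 4) * (1 / (k : ℝ)))
      Filter.atTop (nhds (Real.log (2 * π) / 2 - (1 / 4) * 0)) :=
    tendsto_const_nhds.sub (tendsto_one_div_atTop_nhds_zero_nat.const_mul _)
  rw [mul_zero, sub_zero] at ht
  refine le_of_tendsto ht ?_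
  filter_upwards [Filter.eventually_ge_atTop (m + 1)] with k hk
  have h1 := chi_low k (by omega)
  have h2 := hanti (show m ≤ k by omega)
  simp only at h2
  have e : (1 / 4 : ℝ) * (1 / (k : ℝ)) = 1 / (4 * k) := by field_simp
  rw [e]
  linarith

/-- Stirling's lower bound for `Γ (n / 2 + 1)`. -/
lemma chi_stirling (n : ℕ) (hn : 1 ≤ n) :
    √(π * n) * (n / (2 * exp 1)) ^ ((n : ℝ) / 2) ≤ Gamma ((n : ℝ) / 2 + 1) := by
  have hn' : (0 : ℝ) < n := by exact_mod_cast hn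
  have key : Real.log (2 * π) / 2 ≤ Real.log (Gamma ((n : ℝ) / 2 + 1)) - Real.log ((n : ℝ) / 2) / 2
        - ((n : ℝ) / 2) * Real.log ((n : ℝ) / 2) + ((n : ℝ) / 2) := by
    rcases Nat.even_or_odd' n with ⟨k, rfl | rfl⟩
    · have e : ((2 * k : ℕ) : ℝ) / 2 = k := by push_cast; ring
      rw [e, Real.Gamma_nat_eq_factorial]
      have := Stirling.le_log_factorial_stirling (n := k) (by omega)
      linarith
    · have e : ((2 * k + 1 : ℕ) : ℝ) / 2 = k + 1 / 2 := by push_cast; ring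
      rw [e]
      exact chi_half k
  have hG := Real.Gamma_pos_of_pos (s := (n : ℝ) / 2 + 1) (by positivity)
  rw [← Real.log_le_log_iff (by positivity) hG, Real.log_mul (by positivity) (by positivity),
    Real.log_sqrt (by positivity), Real.log_rpow (by positivity)]
  have e1 : Real.log (π * n) = Real.log (2 * π) + Real.log ((n : ℝ) / 2) := by
    rw [← Real.log_mul (by positivity) (by positivity)]; congr 1; ring
  have e2 : Real.log (n / (2 * exp 1)) = Real.log ((n : ℝ) / 2) - 1 := by
    rw [← div_div, Real.log_div (by positivity) (by positivity), Real.log_exp]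
  rw [e1, e2]
  linarith

/-- Density of the standard Gaussian vector. -/
lemma chi_density (n : ℕ) :
    (Measure.pi fun _ : Fin n => gaussianReal 0 1) =
      (volume : Measure (Fin n → ℝ)).withDensity
        (fun g => ENNReal.ofReal ((√(2 * π))⁻¹ ^ n * exp (-(∑ i, g i ^ 2) / 2))) := by
  have hprod : ∀ g : Fin n → ℝ, (√(2 * π))⁻¹ ^ n * exp (-(∑ i, g i ^ 2) / 2)
      = ∏ i, gaussianPDFReal 0 1 (g i) := by
    intro g
    simp only [gaussianPDFReal, Finset.prod_mul_distrib, ← Real.exp_sum]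
    simp [Finset.sum_div, neg_div]
  simp_rw [hprod]
  refine Measure.pi_eq fun s hs => ?_
  rw [withDensity_apply _ (MeasurableSet.univ_pi hs), volume_pi, Measure.restrict_pi_pi]
  rw [← ofReal_integral_eq_lintegral_ofReal]
  · rw [integral_fintype_prod_eq_prod (fun _ => gaussianPDFReal 0 1), ENNReal.ofReal_prod_of_nonneg]
    · refine Finset.prod_congr rfl fun i _ => ?_
      rw [gaussianReal_apply_eq_integral _ (by simp)]
    · intro i _
      exact integral_nonneg fun x => gaussianPDFReal_nonneg _ _ _
  · exact Integrable.fintype_prod (f := fun _ => gaussianPDFReal 0 1)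
      fun i => (integrable_gaussianPDFReal 0 1).restrict
  · exact Filter.Eventually.of_forall fun g => Finset.prod_nonneg fun i _ =>
      gaussianPDFReal_nonneg _ _ _

lemma chi_integrable (n : ℕ) (b : ℝ) (hb : 0 < b) :
    Integrable (fun g : Fin n → ℝ => exp (-b * ∑ i, g i ^ 2)) := by
  have : (fun g : Fin n → ℝ => exp (-b * ∑ i, g i ^ 2)) =
      fun g => ∏ i, exp (-b * g i ^ 2) := by
    ext g; rw [← Real.exp_sum, Finset.mul_sum]
  rw [this]
  exact Integrable.fintype_prod (f := fun _ x => exp (-b * x ^ 2))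
      fun i => integrable_exp_neg_mul_sq hb

lemma chi_integral (n : ℕ) (b : ℝ) :
    ∫ g : Fin n → ℝ, exp (-b * ∑ i, g i ^ 2) = √(π / b) ^ n := by
  have : (fun g : Fin n → ℝ => exp (-b * ∑ i, g i ^ 2)) =
      fun g => ∏ i, exp (-b * g i ^ 2) := by
    ext g; rw [← Real.exp_sum, Finset.mul_sum]
  rw [this, integral_fintype_prod_volume_eq_pow (fun x : ℝ => exp (-b * x ^ 2)), integral_gaussian]
  simp

lemma chi_measure (n : ℕ) (s : Set (Fin n → ℝ)) (hs : MeasurableSet s) :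
    ((Measure.pi fun _ : Fin n => gaussianReal 0 1) s).toReal =
      ∫ g in s, (√(2 * π))⁻¹ ^ n * exp (-(∑ i, g i ^ 2) / 2) := by
  have hi : Integrable (fun g : Fin n → ℝ => (√(2 * π))⁻¹ ^ n * exp (-(∑ i, g i ^ 2) / 2)) := by
    refine Integrable.const_mul ?_ _
    convert chi_integrable n (1 / 2) (by norm_num) using 3
    ring
  rw [chi_density, withDensity_apply _ hs, ← ofReal_integral_eq_lintegral_ofReal hi.restrict
    (Filter.Eventually.of_forall fun g => by positivity), ENNReal.toReal_ofReal]
  exact integral_nonneg fun g => by positivity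

lemma chi_upper (n : ℕ) (hn : 1 ≤ n) (u : ℝ) (hu : 0 < u) :
    ((Measure.pi fun _ : Fin n => gaussianReal 0 1)
      {g | √n + √(2 * u) ≤ √(∑ i, (g i) ^ 2)}).toReal ≤ exp (-u) := by
  have hn' : (0 : ℝ) < n := by exact_mod_cast hn
  have hms : MeasurableSet {g : Fin n → ℝ | √n + √(2 * u) ≤ √(∑ i, (g i) ^ 2)} :=
    measurableSet_le (by fun_prop) (by fun_prop)
  rw [chi_measure n _ hms]
  set r : ℝ := 1 + √(2 * u) / √n with hr
  have hd : 0 < √(2 * u) / √n := by positivity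
  have hr0 : 0 < r := by positivity
  -- the Chernoff parameter is `(1 - 1 / r ^ 2) / 2`
  set b : ℝ := 1 / (2 * r ^ 2) with hbdef
  have hb : 0 < b := by positivity
  have hb2 : b ≤ 1 / 2 := by
    rw [hbdef, div_le_div_iff₀ (by positivity) (by norm_num)]
    nlinarith
  have hrn : √n + √(2 * u) = √n * r := by rw [hr]; field_simp
  have hint := (chi_integrable n b hb).const_mul ((√(2 * π))⁻¹ ^ n * exp (-(1 / 2 - b) * (n * r ^ 2)))
  calc ∫ g in {g : Fin n → ℝ | √n + √(2 * u) ≤ √(∑ i, (g i) ^ 2)},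
        (√(2 * π))⁻¹ ^ n * exp (-(∑ i, g i ^ 2) / 2)
      ≤ ∫ g in {g : Fin n → ℝ | √n + √(2 * u) ≤ √(∑ i, (g i) ^ 2)},
        (√(2 * π))⁻¹ ^ n * exp (-(1 / 2 - b) * (n * r ^ 2)) * exp (-b * ∑ i, g i ^ 2) := by
        refine integral_mono_of_nonneg (Filter.Eventually.of_forall fun g => by positivity)
          hint.restrict ?_
        refine (ae_restrict_iff' hms).2 (Filter.Eventually.of_forall fun g hg => ?_)
        simp only [Set.mem_ofPred_eq] at hg
        rw [hrn, Real.le_sqrt (by positivity) (by positivity), mul_pow,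
          Real.sq_sqrt hn'.le] at hg
        simp only
        rw [mul_assoc, ← Real.exp_add]
        refine mul_le_mul_of_nonneg_left (Real.exp_le_exp.2 ?_) (by positivity)
        nlinarith
    _ ≤ ∫ g : Fin n → ℝ,
        (√(2 * π))⁻¹ ^ n * exp (-(1 / 2 - b) * (n * r ^ 2)) * exp (-b * ∑ i, g i ^ 2) :=
        setIntegral_le_integral hint (Filter.Eventually.of_forall fun g => by positivity)
    _ = r ^ n * exp (-(1 / 2 - b) * (n * r ^ 2)) := by
        rw [integral_const_mul, chi_integral]
        have : √(π / b) = √(2 * π) * r := by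
          rw [hbdef, show π / (1 / (2 * r ^ 2)) = 2 * π * r ^ 2 by field_simp,
            Real.sqrt_mul (by positivity), Real.sqrt_sq hr0.le]
        rw [this, mul_pow, inv_pow]
        field_simp
    _ ≤ exp (-u) := by
        have h1 : r ≤ exp (r - 1) := by have := Real.add_one_le_exp (r - 1); linarith
        have h2 : r ^ n ≤ exp (n * (r - 1)) := by
          rw [Real.exp_nat_mul]; exact pow_le_pow_left₀ hr0.le h1 n
        refine (mul_le_mul_of_nonneg_right h2 (by positivity)).trans ?_
        rw [← Real.exp_add]
        refine Real.exp_le_exp.2 (le_of_eq ?_)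
        have h3 : b * r ^ 2 = 1 / 2 := by rw [hbdef]; field_simp
        have h4 : (n : ℝ) * (r - 1) ^ 2 = 2 * u := by
          rw [hr, add_sub_cancel_left, div_pow, Real.sq_sqrt hn'.le, Real.sq_sqrt (by positivity)]
          field_simp
        linear_combination (-1 / 2 : ℝ) * h4 + n * h3

/-- Pointwise bound on the radial density. -/
lemma chi_point (n : ℕ) (hn : 1 ≤ n) (y : ℝ) (hy : 0 < y) :
    n * (√π ^ n / Gamma ((n : ℝ) / 2 + 1)) * (y ^ (n - 1) * ((√(2 * π))⁻¹ ^ n * exp (-y ^ 2 / 2)))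
      ≤ 2 / √(π * n) * (exp 1 / (2 * n)) ^ ((n : ℝ) / 4) * ((n : ℝ) / 2) * y ^ ((n : ℝ) / 2 - 1) := by
  have hn' : (0 : ℝ) < n := by exact_mod_cast hn
  have hG := Real.Gamma_pos_of_pos (s := (n : ℝ) / 2 + 1) (by positivity)
  have hst := chi_stirling n hn
  have hS : 0 < √(π * n) * (n / (2 * exp 1)) ^ ((n : ℝ) / 2) := by positivity
  have h1 : n * (√π ^ n / Gamma ((n : ℝ) / 2 + 1))
      * (y ^ (n - 1) * ((√(2 * π))⁻¹ ^ n * exp (-y ^ 2 / 2))) ≤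
      n * (√π ^ n / (√(π * n) * (n / (2 * exp 1)) ^ ((n : ℝ) / 2)))
      * (y ^ (n - 1) * ((√(2 * π))⁻¹ ^ n * exp (-y ^ 2 / 2))) := by
    gcongr
  refine h1.trans ?_
  rw [← Real.log_le_log_iff (by positivity) (by positivity)]
  have p1 : Real.log (y ^ (n - 1)) = (n - 1) * Real.log y := by
    rw [Real.log_pow]; push_cast [Nat.cast_sub hn]; ring
  have hl : Real.log (y ^ 2 * 2 / n) ≤ y ^ 2 * 2 / n - 1 :=
    Real.log_le_sub_one_of_pos (by positivity)
  rw [Real.log_div (by positivity) (by positivity), Real.log_mul (by positivity) (by positivity),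
    Real.log_pow] at hl
  have hl2 := mul_le_mul_of_nonneg_left hl (show (0 : ℝ) ≤ n / 4 by positivity)
  have e3 : (n : ℝ) / 4 * (y ^ 2 * 2 / n - 1) = y ^ 2 / 2 - n / 4 := by field_simp; ring
  rw [e3] at hl2
  push_cast at hl2
  rw [Real.log_mul (by positivity) (by positivity), Real.log_mul (by positivity) (by positivity),
    Real.log_div (by positivity) (by positivity), Real.log_mul (by positivity) (by positivity),
    Real.log_mul (by positivity) (by positivity), Real.log_mul (by positivity) (by positivity),
    Real.log_mul (by positivity) (by positivity), Real.log_mul (by positivity) (by positivity),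
    Real.log_mul (by positivity) (by positivity), p1, Real.log_pow, Real.log_pow, Real.log_inv,
    Real.log_rpow (by positivity), Real.log_rpow (by positivity), Real.log_rpow (by positivity),
    Real.log_div (by positivity) (by positivity), Real.log_div (by positivity) (by positivity),
    Real.log_div (by positivity) (by positivity), Real.log_div (by positivity) (by positivity),
    Real.log_mul (by positivity) (by positivity), Real.log_mul (by positivity) (by positivity),
    Real.log_exp, Real.log_exp, Real.sqrt_mul (by positivity) π,
    Real.log_mul (by positivity) (by positivity), Real.log_sqrt (x := 2) (by positivity)]
  nlinarith

lemma chi_lower (n : ℕ) (hn : 1 ≤ n) (u : ℝ) (hu : 0 < u) :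
    ((Measure.pi fun _ : Fin n => gaussianReal 0 1)
      {g | √(∑ i, (g i) ^ 2) ≤ √(u * n)}).toReal
        ≤ 2 / √(π * n) * (u * exp 1 / 2) ^ ((n : ℝ) / 4) := by
  have hn' : (0 : ℝ) < n := by exact_mod_cast hn
  have hms : MeasurableSet {g : Fin n → ℝ | √(∑ i, (g i) ^ 2) ≤ √(u * n)} :=
    measurableSet_le (by fun_prop) (by fun_prop)
  have : Nonempty (Fin n) := ⟨⟨0, hn⟩⟩
  rw [chi_measure n _ hms]
  set R : ℝ := √(u * n) with hR
  have hR0 : 0 < R := by positivity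
  set F : ℝ → ℝ := (Set.Iic R).indicator
    (fun r => (√(2 * π))⁻¹ ^ n * exp (-r ^ 2 / 2)) with hF
  set K : ℝ := 2 / √(π * n) * (exp 1 / (2 * n)) ^ ((n : ℝ) / 4) with hK
  have hvol : (volume : Measure (EuclideanSpace ℝ (Fin n))).real (Metric.ball 0 1) =
      √π ^ n / Gamma ((n : ℝ) / 2 + 1) := by
    have hG := Real.Gamma_pos_of_pos (s := (n : ℝ) / 2 + 1) (by positivity)
    rw [Measure.real, EuclideanSpace.volume_ball]
    simp only [Fintype.card_fin, ENNReal.ofReal_one, one_pow, one_mul]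
    rw [ENNReal.toReal_ofReal (by positivity)]
  have hint : IntegrableOn (fun y : ℝ => K * ((n : ℝ) / 2) * y ^ ((n : ℝ) / 2 - 1))
      (Set.Ioc 0 R) := by
    have := intervalIntegral.intervalIntegrable_rpow' (a := 0) (b := R)
      (r := (n : ℝ) / 2 - 1) (by linarith)
    rw [intervalIntegrable_iff_integrableOn_Ioc_of_le hR0.le] at this
    exact this.const_mul _
  calc ∫ g in {g : Fin n → ℝ | √(∑ i, (g i) ^ 2) ≤ R},
        (√(2 * π))⁻¹ ^ n * exp (-(∑ i, g i ^ 2) / 2)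
      = ∫ g : Fin n → ℝ, F ‖WithLp.toLp 2 g‖ := by
        rw [← integral_indicator hms]
        refine integral_congr_ae (Filter.Eventually.of_forall fun g => ?_)
        have hnorm : ‖WithLp.toLp 2 g‖ = √(∑ i, g i ^ 2) := by
          rw [EuclideanSpace.norm_eq]; simp
        simp only [hF, hnorm, Set.indicator, Set.mem_ofPred_eq, Set.mem_Iic]
        rw [Real.sq_sqrt (by positivity)]
    _ = ∫ x : EuclideanSpace ℝ (Fin n), F ‖x‖ :=
        (PiLp.volume_preserving_toLp (Fin n)).integral_comp
          (MeasurableEquiv.toLp 2 (Fin n → ℝ)).measurableEmbedding (fun x => F ‖x‖)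
    _ = n * (√π ^ n / Gamma ((n : ℝ) / 2 + 1)) * ∫ y in Set.Ioi (0 : ℝ), y ^ (n - 1) * F y := by
        rw [integral_fun_norm_addHaar, hvol]
        simp [mul_assoc]
    _ = ∫ y in Set.Ioc 0 R, n * (√π ^ n / Gamma ((n : ℝ) / 2 + 1)) *
          (y ^ (n - 1) * ((√(2 * π))⁻¹ ^ n * exp (-y ^ 2 / 2))) := by
        rw [integral_const_mul, ← Set.Ioi_inter_Iic,
          ← setIntegral_indicator (measurableSet_Iic)]
        congr 1
        refine integral_congr_ae (Filter.Eventually.of_forall fun y => ?_)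
        simp only [hF, Set.indicator]
        split_ifs <;> simp
    _ ≤ ∫ y in Set.Ioc 0 R, K * ((n : ℝ) / 2) * y ^ ((n : ℝ) / 2 - 1) := by
        have hG := Real.Gamma_pos_of_pos (s := (n : ℝ) / 2 + 1) (by positivity)
        refine integral_mono_of_nonneg ?_ hint ?_
        · refine (ae_restrict_iff' measurableSet_Ioc).2 (Filter.Eventually.of_forall fun y hy => ?_)
          have := hy.1
          simp only [Pi.zero_apply]
          positivity
        · exact (ae_restrict_iff' measurableSet_Ioc).2 (Filter.Eventually.of_forall fun y hy =>
            chi_point n hn y hy.1)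
    _ = K * R ^ ((n : ℝ) / 2) := by
        rw [integral_const_mul, ← intervalIntegral.integral_of_le hR0.le,
          integral_rpow (Or.inl (by linarith)), sub_add_cancel,
          Real.zero_rpow (by positivity)]
        field_simp
        simp
    _ = 2 / √(π * n) * (u * exp 1 / 2) ^ ((n : ℝ) / 4) := by
        rw [hK, mul_assoc, hR, Real.sqrt_eq_rpow (u * n), ← Real.rpow_mul (by positivity),
          show (1 / 2 : ℝ) * (n / 2) = n / 4 by ring, ← Real.mul_rpow (by positivity) (by positivity)]
        congr 2
        field_simp

/-- Chi-square tail bounds.  Let `χ(ν)` be the square root of a chi-square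
random variable with `ν ≥ 1` degrees of freedom, realized as `√(∑ i, g i ^ 2)` for `g` drawn
from the product of `ν` standard Gaussians. Then for `u > 0`:
(i) `P(χ(ν) ≥ √ν + √(2u)) ≤ exp(-u)`, and
(ii) `P(χ(ν) ≤ √(u ν)) ≤ (2/√(π ν)) (u e/2)^(ν/4)`. -/
theorem chi_square_tail_bounds
    (ν : ℕ) (hν : 1 ≤ ν) (u : ℝ) (hu : 0 < u)
    (μ : Measure (Fin ν → ℝ))
    (hμ : μ = Measure.pi fun _ : Fin ν => gaussianReal 0 1) :
    (μ {g | Real.sqrt ν + Real.sqrt (2 * u) ≤ Real.sqrt (∑ i, (g i) ^ 2)}).toReal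
        ≤ Real.exp (-u) ∧
      (μ {g | Real.sqrt (∑ i, (g i) ^ 2) ≤ Real.sqrt (u * ν)}).toReal
        ≤ 2 / Real.sqrt (π * ν) * (u * Real.exp 1 / 2) ^ ((ν : ℝ) / 4) := by
  subst hμ
  exact ⟨chi_upper ν hν u hu, chi_lower ν hν u hu⟩
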